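/- There do not exist a matrix M ∈ S(G117) and real numbers λ_1 < λ_2 < λ_3 such that the characteristic polynomial of M equals (X − λ_1)^3 (X − λ_2) (X − λ_3)^2, and there do not exist such M and λ_1 < λ_2 < λ_3 with characteristic polynomial (X − λ_1)^2 (X − λ_2) (X − λ_3)^3. That is, G117 attains neither ordered multiplicity list (3,1,2) nor (2,1,3). -/

import Mathlib

/-!
Both lists are excluded by `double_between_of_charpoly`: if a matrix `M` in `S(G117)` has eigenvalues
`l`, `k`, `m` with multiplicities three, one and two, then `m` lies strictly between `l` and `k`. In
both forbidden lists the simple eigenvalue is the middle one.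

Since `M` is symmetric, `M - l` has rank at most three and `M - m` has rank at most four, so the
minors of order four and five respectively vanish. For `M - l` this forces the pendant entry to be
nonzero and each triangle block (the `2 × 2` block away from the cut vertex) to be singular, with the
edges to the cut vertex in its column space (`relations_of_rank_le_three`). Thus `M - l` acts, modulo
a two-dimensional kernel, like a matrix of a star with three leaves carrying the pendant entry and
the traces of the two blocks. A double eigenvalue `m - l` of such a star must sit on all three leaves
(`relations_of_rank_le_four`). The trace of `M` then identifies `k - m` with the diagonal entry of
`M - l` at the cut vertex, and the vanishing Schur complement of the star makes that entry a sum of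
nonzero squares divided by leaf values of the sign of `m - l`, whence `0 < (k - m) * (m - l)`.
-/


open Polynomial Matrix

/-- `M ∈ S(G)`: real symmetric matrix whose off-diagonal nonzero pattern is
given exactly by the adjacency of `G`. -/
def inS {V : Type*} (G : SimpleGraph V) (M : Matrix V V ℝ) : Prop :=
  M.IsSymm ∧ ∀ i j : V, i ≠ j → (M i j ≠ 0 ↔ G.Adj i j)

/-- The graph `G117` on vertices 1..6 (encoded as `Fin 6`, vertex `v` is `v.val + 1`). -/
def G117 : SimpleGraph (Fin 6) :=
  SimpleGraph.fromRel (fun i j =>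
    ((i : ℕ) + 1, (j : ℕ) + 1) ∈ [(1, 2), (2, 3), (2, 4), (2, 5), (2, 6), (3, 4), (5, 6)])


/-- The symmetric matrix carried by `G117`: `a`, `d` are the diagonal entries at the pendant vertex
and at the cut vertex, `u` is the pendant edge, and each triangle contributes its `2 × 2` block
`[p, r; r, q]` and the vector `(s, t)` of its edges to the cut vertex (capitals for the second
triangle). -/
def pattern (a d u p q r s t P Q R S T : ℝ) : Matrix (Fin 6) (Fin 6) ℝ :=
  !![a, u, 0, 0, 0, 0;
     u, d, s, t, S, T;
     0, s, p, r, 0, 0;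
     0, t, r, q, 0, 0;
     0, S, 0, 0, P, R;
     0, T, 0, 0, R, Q]

theorem exists_pattern {M : Matrix (Fin 6) (Fin 6) ℝ} (h : inS G117 M) :
    ∃ a d u p q r s t P Q R S T : ℝ, u ≠ 0 ∧ r ≠ 0 ∧ s ≠ 0 ∧ t ≠ 0 ∧ R ≠ 0 ∧ S ≠ 0 ∧ T ≠ 0 ∧
      M = pattern a d u p q r s t P Q R S T := by
  obtain ⟨hs, hp⟩ := h
  have ne : ∀ i j : Fin 6, i ≠ j → G117.Adj i j → M i j ≠ 0 := fun i j hij => (hp i j hij).2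
  have eq : ∀ i j : Fin 6, i ≠ j → ¬ G117.Adj i j → M i j = 0 := fun i j hij hn => by
    by_contra hc
    exact hn ((hp i j hij).1 hc)
  refine ⟨M 0 0, M 1 1, M 0 1, M 2 2, M 3 3, M 2 3, M 1 2, M 1 3, M 4 4, M 5 5, M 4 5, M 1 4, M 1 5,
    ne _ _ (by decide) (by simp [G117]), ne _ _ (by decide) (by simp [G117]),
    ne _ _ (by decide) (by simp [G117]), ne _ _ (by decide) (by simp [G117]),
    ne _ _ (by decide) (by simp [G117]), ne _ _ (by decide) (by simp [G117]),
    ne _ _ (by decide) (by simp [G117]), ?_⟩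
  ext i j
  fin_cases i <;> fin_cases j <;>
    first
    | rfl
    | exact hs.apply _ _
    | exact eq _ _ (by decide) (by simp [G117])

theorem pattern_sub_scalar (a d u p q r s t P Q R S T x : ℝ) :
    pattern a d u p q r s t P Q R S T - scalar (Fin 6) x =
      pattern (a - x) (d - x) u (p - x) (q - x) r s t (P - x) (Q - x) R S T := by
  ext i j
  fin_cases i <;> fin_cases j <;> simp [pattern]

/-- An eigenvalue of algebraic multiplicity at least `k` lowers the rank by at least `k`, because a
real symmetric matrix is diagonalizable. -/
theorem rank_sub_scalar_add_le {n k : ℕ} {M : Matrix (Fin n) (Fin n) ℝ} (hM : M.IsSymm) {x : ℝ}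
    (h : (X - C x) ^ k ∣ M.charpoly) : (M - scalar (Fin n) x).rank + k ≤ n := by
  have hA : (M - scalar (Fin n) x).IsHermitian := by
    have : (M - scalar (Fin n) x).IsSymm := by
      simp [Matrix.IsSymm, Matrix.transpose_sub, hM.eq]
    rwa [Matrix.IsHermitian, conjTranspose_eq_transpose_of_trivial]
  have hd : (X - C (0 : ℝ)) ^ k ∣ (M - scalar (Fin n) x).charpoly := by
    obtain ⟨g, hg⟩ := h
    rw [charpoly_sub_scalar, hg]
    exact ⟨g.comp (X + C x), by simp⟩
  have hk := (le_rootMultiplicity_iff (charpoly_monic _).ne_zero).2 hd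
  rw [← count_roots, hA.roots_charpoly_eq_eigenvalues, Multiset.count_map] at hk
  rw [hA.rank_eq_card_non_zero_eigs, Fintype.card_subtype_compl, Fintype.card_fin]
  have h2 : k ≤ Fintype.card {i // hA.eigenvalues i = 0} := by
    rw [Fintype.card_subtype]
    refine hk.trans (le_of_eq ?_)
    simp only [Finset.card_def, Finset.filter_val, eq_comm (a := (0 : ℝ))]
    rfl
  have h3 := Fintype.card_subtype_le (fun i => hA.eigenvalues i = 0)
  rw [Fintype.card_fin] at h3
  omega

/-- Minors of size exceeding the rank vanish. -/
theorem minor_eq_zero {n m : ℕ} {A : Matrix (Fin n) (Fin n) ℝ} {B : Matrix (Fin m) (Fin m) ℝ}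
    (h : A.rank < m) (f g : Fin m → Fin n) (hB : A.submatrix f g = B) : B.det = 0 := by
  subst hB
  by_contra hc
  have h1 := rank_of_isUnit _ ((isUnit_iff_isUnit_det _).2 (isUnit_iff_ne_zero.2 hc))
  have h2 := rank_submatrix_le A f g
  rw [Fintype.card_fin] at h1
  omega

/-- At an eigenvalue of multiplicity three (shifted to zero) the pendant entry is nonzero, both
triangle blocks are singular with `(s, t)` and `(S, T)` in their column spaces, and the Schur
complement onto the cut vertex vanishes. -/
theorem relations_of_rank_le_three {a d u p q r s t P Q R S T : ℝ}
    (hu : u ≠ 0) (hr : r ≠ 0) (hR : R ≠ 0)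
    (h : (pattern a d u p q r s t P Q R S T).rank < 4) :
    a ≠ 0 ∧ p * q = r ^ 2 ∧ P * Q = R ^ 2 ∧ s * r = t * p ∧ S * R = T * P ∧
      d * a * p * P = u ^ 2 * p * P + s ^ 2 * a * P + S ^ 2 * a * p := by
  -- The first five minors are sparse: up to entries known to be nonzero, `m1` computes `u ^ 2` when
  -- `a = 0`, and `m2`-`m5` each isolate one triangle. The last one is the Schur complement.
  have m1 : !![a, u, 0, 0; u, d, t, T; 0, s, r, 0; 0, S, 0, R].det = 0 :=
    minor_eq_zero h ![0, 1, 2, 4] ![0, 1, 3, 5] (by ext i j; fin_cases i <;> fin_cases j <;> rfl)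
  have m2 : !![a, 0, 0, 0; 0, p, r, 0; 0, r, q, 0; 0, 0, 0, R].det = 0 :=
    minor_eq_zero h ![0, 2, 3, 4] ![0, 2, 3, 5] (by ext i j; fin_cases i <;> fin_cases j <;> rfl)
  have m3 : !![a, 0, 0, 0; 0, r, 0, 0; 0, 0, P, R; 0, 0, R, Q].det = 0 :=
    minor_eq_zero h ![0, 2, 4, 5] ![0, 3, 4, 5] (by ext i j; fin_cases i <;> fin_cases j <;> rfl)
  have m4 : !![a, 0, 0, 0; u, s, t, T; 0, p, r, 0; 0, 0, 0, R].det = 0 :=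
    minor_eq_zero h ![0, 1, 2, 4] ![0, 2, 3, 5] (by ext i j; fin_cases i <;> fin_cases j <;> rfl)
  have m5 : !![a, 0, 0, 0; u, t, S, T; 0, r, 0, 0; 0, 0, P, R].det = 0 :=
    minor_eq_zero h ![0, 1, 2, 4] ![0, 3, 4, 5] (by ext i j; fin_cases i <;> fin_cases j <;> rfl)
  have m6 : !![a, u, 0, 0; u, d, s, S; 0, s, p, 0; 0, S, 0, P].det = 0 :=
    minor_eq_zero h ![0, 1, 2, 4] ![0, 1, 2, 4] (by ext i j; fin_cases i <;> fin_cases j <;> rfl)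
  simp [det_succ_row_zero, Fin.sum_univ_succ, Fin.succAbove] at m1 m2 m3 m4 m5 m6
  have ha : a ≠ 0 := by
    rintro rfl
    have : u ^ 2 * (r * R) = 0 := by linear_combination -m1
    simp_all
  replace m2 := m2.resolve_left ha
  replace m3 := (m3.resolve_left ha).resolve_left hr
  replace m4 := m4.resolve_left ha
  replace m5 := m5.resolve_left ha
  refine ⟨ha, mul_right_cancel₀ hR ?_, ?_, mul_right_cancel₀ hR ?_, mul_right_cancel₀ hr ?_, ?_⟩
  · linear_combination m2
  · linear_combination m3
  · linear_combination m4
  · linear_combination -m5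
  · linear_combination m6

/-- At a further double eigenvalue `y` each of the three branches at the cut vertex has `y` as an
eigenvalue: the pendant entry and the traces of the two singular triangle blocks all equal `y`. -/
theorem relations_of_rank_le_four {a d u p q r s t P Q R S T y : ℝ}
    (hu : u ≠ 0) (hr : r ≠ 0) (hR : R ≠ 0) (hs : s ≠ 0) (hS : S ≠ 0) (hy : y ≠ 0)
    (h1 : p * q = r ^ 2) (h2 : P * Q = R ^ 2) (h3 : s * r = t * p) (h4 : S * R = T * P)
    (h : (pattern (a - y) (d - y) u (p - y) (q - y) r s t (P - y) (Q - y) R S T).rank < 5) :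
    a = y ∧ p + q = y ∧ P + Q = y := by
  -- Deleting a row and a column in two different branches at the cut vertex leaves a minor that
  -- is, up to nonzero factors, the determinant of the third branch (shifted by `y`).
  have m1 : !![a - y, u, 0, 0, 0; u, d - y, s, t, T; 0, t, r, q - y, 0; 0, S, 0, 0, R; 0, T, 0, 0, Q - y].det = 0 :=
    minor_eq_zero h ![0, 1, 3, 4, 5] ![0, 1, 2, 3, 5] (by ext i j; fin_cases i <;> fin_cases j <;> rfl)
  have m2 : !![u, d - y, t, S, T; 0, s, r, 0, 0; 0, t, q - y, 0, 0; 0, S, 0, P - y, R; 0, T, 0, R, Q - y].det = 0 :=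
    minor_eq_zero h ![1, 2, 3, 4, 5] ![0, 1, 3, 4, 5] (by ext i j; fin_cases i <;> fin_cases j <;> rfl)
  have m3 : !![u, d - y, s, t, T; 0, s, p - y, r, 0; 0, t, r, q - y, 0; 0, S, 0, 0, R; 0, T, 0, 0, Q - y].det = 0 :=
    minor_eq_zero h ![1, 2, 3, 4, 5] ![0, 1, 2, 3, 5] (by ext i j; fin_cases i <;> fin_cases j <;> rfl)
  simp [det_succ_row_zero, Fin.sum_univ_succ, Fin.succAbove] at m1 m2 m3
  have hp : p ≠ 0 := by
    rintro rfl
    exact pow_ne_zero 2 hr (by rw [← h1, zero_mul])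
  have hP : P ≠ 0 := by
    rintro rfl
    exact pow_ne_zero 2 hR (by rw [← h2, zero_mul])
  -- The two columns of a singular block are parallel, so `(s, t)` is parallel to the second too.
  have h5 : s * q = t * r := mul_left_cancel₀ hp (by linear_combination s * h1 + r * h3)
  have h6 : S * Q = T * R := mul_left_cancel₀ hP (by linear_combination S * h2 + R * h4)
  replace m2 := m2.resolve_left hu
  replace m3 := m3.resolve_left hu
  refine ⟨?_, ?_, ?_⟩
  · rcases m1 with m1 | m1
    · linarith
    · have : s * S * y ^ 2 = 0 := by linear_combination m1 - (S * (Q - y) - R * T) * h5 + s * y * h6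
      simp_all
  · have : S * y ^ 2 * (p + q - y) = 0 := by
      linear_combination m3 - ((p - y) * (q - y) - r ^ 2) * h6 + S * y * h1
    have := (mul_eq_zero.1 this).resolve_left (by positivity)
    linarith
  · have : s * y ^ 2 * (P + Q - y) = 0 := by
      linear_combination m2 - ((P - y) * (Q - y) - R ^ 2) * h5 + s * y * h2
    have := (mul_eq_zero.1 this).resolve_left (by positivity)
    linarith

/-- If `l`, `k`, `m` are the eigenvalues with multiplicities three, one and two, then the double
eigenvalue `m` lies strictly between `l` and `k`. -/
theorem double_between_of_charpoly {M : Matrix (Fin 6) (Fin 6) ℝ} (hM : inS G117 M) {l k m : ℝ}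
    (hlm : l ≠ m) (hc : M.charpoly = (X - C l) ^ 3 * (X - C k) * (X - C m) ^ 2) :
    0 < (k - m) * (m - l) := by
  have hl := rank_sub_scalar_add_le (k := 3) (x := l) hM.1
    (hc ▸ Dvd.intro _ (mul_assoc _ _ _).symm)
  have hm := rank_sub_scalar_add_le (k := 2) (x := m) hM.1 (hc ▸ Dvd.intro_left _ rfl)
  have htr : M.trace = 3 * l + k + 2 * m := by
    have hsp : M.charpoly.Splits := by
      rw [hc]
      exact (((Splits.X_sub_C l).pow 3).mul (Splits.X_sub_C k)).mul ((Splits.X_sub_C m).pow 2)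
    rw [trace_eq_sum_roots_charpoly_of_splits hsp, hc, roots_mul, roots_mul]
    · simp [Multiset.sum_nsmul]
    all_goals simp [X_sub_C_ne_zero]
  obtain ⟨a, d, u, p, q, r, s, t, P, Q, R, S, T, hu, hr, hs, ht, hR, hS, hT, rfl⟩ :=
    exists_pattern hM
  rw [pattern_sub_scalar] at hl hm
  obtain ⟨ha, h1, h2, h3, h4, hd⟩ :=
    relations_of_rank_le_three hu hr hR
      (Nat.lt_of_add_lt_add_right (hl.trans_lt (by norm_num : 6 < 4 + 3)))
  have hy : m - l ≠ 0 := sub_ne_zero.2 hlm.symm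
  obtain ⟨e1, e2, e3⟩ := relations_of_rank_le_four (a := a - l) (d := d - l) (y := m - l)
    hu hr hR hs hS hy h1 h2 h3 h4 (by simp only [sub_sub_sub_cancel_right]; omega)
  -- Comparison of traces: the three branches contribute `3 * (m - l)` to the trace of `M - l`.
  have hk : k - m = d - l := by
    simp [trace, pattern, Fin.sum_univ_succ] at htr
    linarith
  rw [hk]
  generalize a - l = a at *
  generalize d - l = d at *
  generalize p - l = p at *
  generalize q - l = q at *
  generalize P - l = P at *
  generalize Q - l = Q at *
  generalize m - l = y at *
  subst e1
  -- Each triangle block is a singular matrix of trace `a`, so its diagonal has the sign of `a`.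
  have hp : 0 < p * a := by
    have : p * a = p ^ 2 + r ^ 2 := by linear_combination h1 - p * e2
    rw [this]; positivity
  have hP : 0 < P * a := by
    have : P * a = P ^ 2 + R ^ 2 := by linear_combination h2 - P * e3
    rw [this]; positivity
  -- Multiplied by `a ^ 4`, the vanishing Schur complement involves only `d * a` and the positive
  -- quantities `a ^ 2`, `p * a`, `P * a`.
  have h : (d * a) * (a ^ 2 * ((p * a) * (P * a))) =
      a ^ 2 * (u ^ 2 * ((p * a) * (P * a)) + s ^ 2 * a ^ 2 * (P * a) + S ^ 2 * a ^ 2 * (p * a)) := by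
    linear_combination a ^ 4 * hd
  have hpos : 0 < (d * a) * (a ^ 2 * ((p * a) * (P * a))) := by
    rw [h]; positivity
  exact pos_of_mul_pos_left hpos (by positivity)

theorem G117_not_312_213 :
    (¬ ∃ (M : Matrix (Fin 6) (Fin 6) ℝ) (l₁ l₂ l₃ : ℝ),
        inS G117 M ∧ l₁ < l₂ ∧ l₂ < l₃ ∧
        M.charpoly = (X - C l₁) ^ 3 * (X - C l₂) * (X - C l₃) ^ 2) ∧
    (¬ ∃ (M : Matrix (Fin 6) (Fin 6) ℝ) (l₁ l₂ l₃ : ℝ),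
        inS G117 M ∧ l₁ < l₂ ∧ l₂ < l₃ ∧
        M.charpoly = (X - C l₁) ^ 2 * (X - C l₂) * (X - C l₃) ^ 3) := by
  constructor
  · rintro ⟨M, l₁, l₂, l₃, hM, h12, h23, hc⟩
    have := double_between_of_charpoly hM (by linarith : l₁ < l₃).ne hc
    exact absurd this (mul_neg_of_neg_of_pos (by linarith) (by linarith)).not_gt
  · rintro ⟨M, l₁, l₂, l₃, hM, h12, h23, hc⟩
    have := double_between_of_charpoly (k := l₂) hM (by linarith : l₁ < l₃).ne' (hc.trans (by ring))
    exact absurd this (mul_neg_of_pos_of_neg (by linarith) (by linarith)).not_gt
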